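/- Let X and Y be real random variables with X ≥ 0 a.s. and Y ≥ 0 a.s. Then h(Y) − h(X) ≥ E[h′(X)·(Y − X)], where the right-hand side is a well-defined element of [−∞, ∞) since h′(X) ≤ 0 a.s. -/

import Mathlib

/-!
Writing `h_a` for the entropic risk measure, the density `q_X = e^{-aX} / E[e^{-aX}]` equals
`e^{-a (X + h_a(X))}`. The tangent line inequality `e^x (y - x) ≤ e^y - e^x` at
`x = -a (X + h_a(X))`, `y = -a (Y + h_a(Y))`, divided by `a`, is the pointwise bound
`-q_X (Y - X) ≤ (h_a(Y) - h_a(X) - 1/a) q_X + (1/a) q_Y`.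
Since `q_X` and `q_Y` have expectation `1`, the right-hand side has expectation
`h_a(Y) - h_a(X)`, and Fubini's theorem lets us integrate it over `a`. Thus `h′(X) (Y - X)`, which
need not be integrable, lies below an integrable random variable with expectation `h(Y) - h(X)`.
-/

open MeasureTheory Filter Set
open scoped ENNReal

noncomputable section

variable {Ω : Type*} [MeasurableSpace Ω]

/-- Entropic risk measure `h_a(X) = (1/a) log E[e^{-aX}]`. -/
def entropic (P : Measure Ω) (a : ℝ) (X : Ω → ℝ) : ℝ :=
  (1 / a) * Real.log (∫ ω, Real.exp (-a * X ω) ∂P)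

/-- Weighted entropic risk measure `h(X) = ∫_{[a₀,a₁]} h_a(X) m(da)`. -/
def werm (P : Measure Ω) (m : Measure ℝ) (a₀ a₁ : ℝ) (X : Ω → ℝ) : ℝ :=
  ∫ a in Set.Icc a₀ a₁, entropic P a X ∂m

/-- Marginal risk density transform `h′(X) = -∫_{[a₀,a₁]} e^{-aX}/E[e^{-aX}] m(da)`. -/
def hprime (P : Measure Ω) (m : Measure ℝ) (a₀ a₁ : ℝ) (X : Ω → ℝ) (ω : Ω) : ℝ :=
  -∫ a in Set.Icc a₀ a₁, Real.exp (-a * X ω) / (∫ ω', Real.exp (-a * X ω') ∂P) ∂m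

/-- Extended-real-valued expectation `E[f] = ∫ f⁺ - ∫ f⁻ ∈ [-∞,∞]`. -/
def eint (P : Measure Ω) (f : Ω → ℝ) : EReal :=
  ((∫⁻ ω, ENNReal.ofReal (f ω) ∂P : ℝ≥0∞) : EReal)
    - ((∫⁻ ω, ENNReal.ofReal (-(f ω)) ∂P : ℝ≥0∞) : EReal)

/-- `E[ρX] ∈ [0,∞]` for a nonnegative payoff. -/
def budget (P : Measure Ω) (ρ X : Ω → ℝ) : ℝ≥0∞ := ∫⁻ ω, ENNReal.ofReal (ρ ω * X ω) ∂P

/-- `X ∈ L⁰₊`: a nonnegative random variable. -/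
def Lpos (P : Measure Ω) (X : Ω → ℝ) : Prop := Measurable X ∧ ∀ᵐ ω ∂P, 0 ≤ X ω

/-- Objective of the Lagrangian risk-minimization problem: `h(X) + λ E[ρX]`. -/
def robj (P : Measure Ω) (m : Measure ℝ) (a₀ a₁ : ℝ) (ρ : Ω → ℝ) (lam : ℝ) (X : Ω → ℝ) : EReal :=
  ((werm P m a₀ a₁ X : ℝ) : EReal) + (lam : EReal) * ((budget P ρ X : ℝ≥0∞) : EReal)

/-- `ψ_X(y) = ∫_{[a₀,a₁]} e^{-ay} / E[e^{-aX}] m(da)`. -/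
def psi (P : Measure Ω) (m : Measure ℝ) (a₀ a₁ : ℝ) (X : Ω → ℝ) (y : ℝ) : ℝ :=
  ∫ a in Set.Icc a₀ a₁, Real.exp (-a * y) / (∫ ω, Real.exp (-a * X ω) ∂P) ∂m

/-- Inverse of `ψ_X` on `(0,∞)` (realized via `sSup`, since `ψ_X` is continuous, strictly
decreasing with limits `∞` at `-∞` and `0` at `∞`). -/
def psiInv (P : Measure Ω) (m : Measure ℝ) (a₀ a₁ : ℝ) (X : Ω → ℝ) (z : ℝ) : ℝ :=
  sSup {y : ℝ | z ≤ psi P m a₀ a₁ X y}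

/-- The transform `𝐓X = max(ψ_X⁻¹(λρ), 0)`. -/
def Ttrans (P : Measure Ω) (m : Measure ℝ) (a₀ a₁ lam : ℝ) (ρ : Ω → ℝ) (X : Ω → ℝ) : Ω → ℝ :=
  fun ω => max (psiInv P m a₀ a₁ X (lam * ρ ω)) 0

/-- `X ∈ 𝒳(x)`: nonnegative and `E[ρX] ≤ x`. -/
def feasible (P : Measure Ω) (ρ : Ω → ℝ) (x : ℝ) (X : Ω → ℝ) : Prop :=
  Lpos P X ∧ budget P ρ X ≤ ENNReal.ofReal x

/-- `γ₁(x)`: the minimal value of `h` over `𝒳(x)`. -/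
def gamma1 (P : Measure Ω) (m : Measure ℝ) (a₀ a₁ : ℝ) (ρ : Ω → ℝ) (x : ℝ) : ℝ :=
  sInf (werm P m a₀ a₁ '' {X | feasible P ρ x X})

/-- Expected utility `E[U(X)] ∈ [-∞,∞]`. -/
def eutil (P : Measure Ω) (U : ℝ → ℝ) (X : Ω → ℝ) : EReal := eint P (fun ω => U (X ω))

/-- Full Lagrangian objective `E[U(X)] - μ h(X) - λ E[ρX]`. -/
def fullObj (P : Measure Ω) (m : Measure ℝ) (a₀ a₁ : ℝ) (ρ : Ω → ℝ) (U : ℝ → ℝ)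
    (μ lam : ℝ) (X : Ω → ℝ) : EReal :=
  eutil P U X - ((μ * werm P m a₀ a₁ X : ℝ) : EReal)
    - (lam : EReal) * ((budget P ρ X : ℝ≥0∞) : EReal)

open ProbabilityTheory

section ExtendedExpectation

variable {P : Measure Ω} {f g : Ω → ℝ}

lemma eint_mono_ae (hfg : f ≤ᵐ[P] g) : eint P f ≤ eint P g := by
  refine EReal.sub_le_sub (EReal.coe_ennreal_le_coe_ennreal_iff.2 (lintegral_mono_ae ?_))
    (EReal.coe_ennreal_le_coe_ennreal_iff.2 (lintegral_mono_ae ?_))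
  · filter_upwards [hfg] with ω h using ENNReal.ofReal_le_ofReal h
  · filter_upwards [hfg] with ω h using ENNReal.ofReal_le_ofReal (neg_le_neg h)

lemma eint_eq_coe_integral (hf : Integrable f P) : eint P f = ((∫ ω, f ω ∂P : ℝ) : EReal) := by
  have hpos : ∫⁻ ω, ENNReal.ofReal (f ω) ∂P ≠ ⊤ := hf.lintegral_lt_top.ne
  have hneg : ∫⁻ ω, ENNReal.ofReal (-f ω) ∂P ≠ ⊤ := hf.neg.lintegral_lt_top.ne
  rw [integral_eq_lintegral_pos_part_sub_lintegral_neg_part hf, eint, EReal.coe_sub,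
    EReal.coe_ennreal_toReal hpos, EReal.coe_ennreal_toReal hneg]

end ExtendedExpectation

lemma exp_mul_sub_le_exp_sub_exp (x y : ℝ) : Real.exp x * (y - x) ≤ Real.exp y - Real.exp x := by
  have h : y - x ≤ Real.exp (y - x) - 1 := le_sub_iff_add_le.2 (Real.add_one_le_exp _)
  calc Real.exp x * (y - x) ≤ Real.exp x * (Real.exp (y - x) - 1) :=
        mul_le_mul_of_nonneg_left h (Real.exp_pos x).le
    _ = Real.exp y - Real.exp x := by
        rw [mul_sub_one, ← Real.exp_add, add_sub_cancel]

lemma exp_mul_le_add_of_mem_Icc {s t u : ℝ} (hu : u ∈ Icc s t) (x : ℝ) :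
    Real.exp (u * x) ≤ Real.exp (s * x) + Real.exp (t * x) := by
  rcases le_total 0 x with hx | hx
  · exact (Real.exp_le_exp.2 (mul_le_mul_of_nonneg_right hu.2 hx)).trans
      (le_add_of_nonneg_left (Real.exp_pos _).le)
  · exact (Real.exp_le_exp.2 (mul_le_mul_of_nonpos_right hu.1 hx)).trans
      (le_add_of_nonneg_right (Real.exp_pos _).le)

lemma continuousOn_mgf_Icc {P : Measure Ω} {X : Ω → ℝ} {s t : ℝ} (hs : s ∈ integrableExpSet X P)
    (ht : t ∈ integrableExpSet X P) : ContinuousOn (mgf X P) (Icc s t) := by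
  refine continuousOn_of_dominated (fun u hu => ?_) (fun u hu => .of_forall fun ω => ?_)
    (Integrable.add hs ht) (.of_forall fun ω => by fun_prop)
  · exact (integrable_exp_mul_of_le_of_le hs ht hu.1 hu.2).aestronglyMeasurable
  · rw [Real.norm_of_nonneg (Real.exp_pos _).le]
    exact exp_mul_le_add_of_mem_Icc hu _

lemma neg_mem_integrableExpSet_of_nonneg {P : Measure Ω} [IsFiniteMeasure P] {X : Ω → ℝ}
    (hmX : AEMeasurable X P) (hX0 : ∀ᵐ ω ∂P, 0 ≤ X ω) {a : ℝ} (ha : 0 ≤ a) :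
    -a ∈ integrableExpSet X P := by
  have h := integrable_exp_mul_of_le a 0 ha hmX.neg (hX0.mono fun _ => neg_nonpos.2)
  simpa only [integrableExpSet, mem_ofPred_eq, Pi.neg_apply, mul_neg, neg_mul] using h

lemma continuousOn_one_div_Icc {a₀ a₁ : ℝ} (ha₀ : 0 < a₀) :
    ContinuousOn (fun a : ℝ => 1 / a) (Icc a₀ a₁) :=
  continuousOn_const.div continuousOn_id fun _ ha => (ha₀.trans_le ha.1).ne'

/-- The density `e^{-aX} / E[e^{-aX}]` of the exponentially tilted measure; up to sign, the
derivative of the entropic risk measure `h_a` at `X`. -/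
def entropicDensity (P : Measure Ω) (X : Ω → ℝ) (a : ℝ) (ω : Ω) : ℝ :=
  Real.exp (-a * X ω) / mgf X P (-a)

/-- For fixed `a`, the upper bound for `-entropicDensity P X a * (Y - X)` given by convexity of the
exponential function. Its expectation is `h_a(Y) - h_a(X)`. -/
def entropicMajorant (P : Measure Ω) (X Y : Ω → ℝ) (a : ℝ) (ω : Ω) : ℝ :=
  (entropic P a Y - entropic P a X - 1 / a) * entropicDensity P X a ω
    + 1 / a * entropicDensity P Y a ω

section Density

variable {P : Measure Ω} {X Y : Ω → ℝ} {a : ℝ}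

lemma entropicDensity_nonneg (ω : Ω) : 0 ≤ entropicDensity P X a ω :=
  div_nonneg (Real.exp_pos _).le mgf_nonneg

lemma hprime_eq_neg_setIntegral_entropicDensity {m : Measure ℝ} {a₀ a₁ : ℝ} (ω : Ω) :
    hprime P m a₀ a₁ X ω = -∫ a in Icc a₀ a₁, entropicDensity P X a ω ∂m :=
  rfl

lemma integrable_entropicDensity (hX : -a ∈ integrableExpSet X P) :
    Integrable (entropicDensity P X a) P :=
  (integrable_of_mem_integrableExpSet hX).div_const _

variable [NeZero P]

lemma integral_entropicDensity (hX : -a ∈ integrableExpSet X P) :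
    ∫ ω, entropicDensity P X a ω ∂P = 1 :=
  (integral_div _ _).trans (div_self (mgf_pos' (NeZero.ne P) hX).ne')

lemma entropicDensity_eq_exp (ha : a ≠ 0) (hX : -a ∈ integrableExpSet X P) (ω : Ω) :
    entropicDensity P X a ω = Real.exp (-a * (X ω + entropic P a X)) := by
  have hcgf : a * entropic P a X = cgf X P (-a) := by
    rw [entropic, ← mul_assoc, mul_one_div_cancel ha, one_mul, cgf, mgf]
  rw [entropicDensity, ← exp_cgf hX, ← Real.exp_sub, ← hcgf]
  ring_nf

lemma neg_entropicDensity_mul_sub_le (ha : 0 < a) (hX : -a ∈ integrableExpSet X P)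
    (hY : -a ∈ integrableExpSet Y P) (ω : Ω) :
    -(entropicDensity P X a ω * (Y ω - X ω)) ≤ entropicMajorant P X Y a ω := by
  have tangent :=
    exp_mul_sub_le_exp_sub_exp (-a * (X ω + entropic P a X)) (-a * (Y ω + entropic P a Y))
  rw [← entropicDensity_eq_exp ha.ne' hX, ← entropicDensity_eq_exp ha.ne' hY] at tangent
  rw [entropicMajorant, ← mul_le_mul_iff_right₀ ha]
  field_simp
  linarith

lemma integral_entropicMajorant (hX : -a ∈ integrableExpSet X P)
    (hY : -a ∈ integrableExpSet Y P) :
    ∫ ω, entropicMajorant P X Y a ω ∂P = entropic P a Y - entropic P a X := by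
  simp only [entropicMajorant]
  rw [integral_add ((integrable_entropicDensity hX).const_mul _)
    ((integrable_entropicDensity hY).const_mul _), integral_const_mul, integral_const_mul,
    integral_entropicDensity hX, integral_entropicDensity hY]
  ring

lemma integrable_mul_entropicDensity_prod [SFinite P] {ν : Measure ℝ} [SFinite ν] {c : ℝ → ℝ}
    (hmX : AEMeasurable X P) (hX : ∀ᵐ a ∂ν, -a ∈ integrableExpSet X P) (hc : Integrable c ν) :
    Integrable (fun p : ℝ × Ω => c p.1 * entropicDensity P X p.1 p.2) (ν.prod P) := by
  have hexp : AEMeasurable (fun p : ℝ × Ω => Real.exp (-p.1 * X p.2)) (ν.prod P) :=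
    Real.measurable_exp.comp_aemeasurable (measurable_fst.neg.aemeasurable.mul hmX.comp_snd)
  have hmgf : AEMeasurable (fun a => mgf X P (-a)) ν :=
    hexp.aestronglyMeasurable.integral_prod_right'.aemeasurable
  have hmeas : AEStronglyMeasurable
      (fun p : ℝ × Ω => c p.1 * entropicDensity P X p.1 p.2) (ν.prod P) :=
    (hc.aemeasurable.comp_fst.mul (hexp.div hmgf.comp_fst)).aestronglyMeasurable
  refine (integrable_prod_iff hmeas).2 ⟨?_, hc.norm.congr ?_⟩
  · filter_upwards [hX] with a ha using (integrable_entropicDensity ha).const_mul _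
  · filter_upwards [hX] with a ha
    simp only [norm_mul, Real.norm_of_nonneg (entropicDensity_nonneg _), integral_const_mul,
      integral_entropicDensity ha, mul_one]

end Density

section WeightInterval

variable {P : Measure Ω} {X Y : Ω → ℝ} {a₀ a₁ : ℝ}

lemma continuousOn_mgf_neg (hX : ∀ a ∈ Icc a₀ a₁, -a ∈ integrableExpSet X P) :
    ContinuousOn (fun a => mgf X P (-a)) (Icc a₀ a₁) := by
  rcases lt_or_ge a₁ a₀ with h | h
  · simp only [Icc_eq_empty_of_lt h, continuousOn_empty]
  · exact (continuousOn_mgf_Icc (hX a₁ (right_mem_Icc.2 h)) (hX a₀ (left_mem_Icc.2 h))).comp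
      continuousOn_neg fun _ ha => ⟨neg_le_neg ha.2, neg_le_neg ha.1⟩

variable [NeZero P]

lemma continuousOn_entropicDensity (hX : ∀ a ∈ Icc a₀ a₁, -a ∈ integrableExpSet X P) (ω : Ω) :
    ContinuousOn (fun a => entropicDensity P X a ω) (Icc a₀ a₁) :=
  ContinuousOn.div (by fun_prop) (continuousOn_mgf_neg hX)
    fun a ha => (mgf_pos' (NeZero.ne P) (hX a ha)).ne'

lemma continuousOn_entropic (ha₀ : 0 < a₀) (hX : ∀ a ∈ Icc a₀ a₁, -a ∈ integrableExpSet X P) :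
    ContinuousOn (fun a => entropic P a X) (Icc a₀ a₁) :=
  (continuousOn_one_div_Icc ha₀).mul
    ((continuousOn_mgf_neg hX).log fun a ha => (mgf_pos' (NeZero.ne P) (hX a ha)).ne')

lemma continuousOn_entropic_sub_sub_one_div (ha₀ : 0 < a₀)
    (hX : ∀ a ∈ Icc a₀ a₁, -a ∈ integrableExpSet X P)
    (hY : ∀ a ∈ Icc a₀ a₁, -a ∈ integrableExpSet Y P) :
    ContinuousOn (fun a => entropic P a Y - entropic P a X - 1 / a) (Icc a₀ a₁) :=
  ((continuousOn_entropic ha₀ hY).sub (continuousOn_entropic ha₀ hX)).sub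
    (continuousOn_one_div_Icc ha₀)

lemma continuousOn_entropicMajorant (ha₀ : 0 < a₀)
    (hX : ∀ a ∈ Icc a₀ a₁, -a ∈ integrableExpSet X P)
    (hY : ∀ a ∈ Icc a₀ a₁, -a ∈ integrableExpSet Y P) (ω : Ω) :
    ContinuousOn (fun a => entropicMajorant P X Y a ω) (Icc a₀ a₁) :=
  ((continuousOn_entropic_sub_sub_one_div ha₀ hX hY).mul (continuousOn_entropicDensity hX ω)).add
    ((continuousOn_one_div_Icc ha₀).mul (continuousOn_entropicDensity hY ω))

variable {m : Measure ℝ} [IsLocallyFiniteMeasure m]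

lemma integrable_entropicMajorant_prod [SFinite P] (ha₀ : 0 < a₀)
    (hmX : AEMeasurable X P) (hmY : AEMeasurable Y P)
    (hX : ∀ a ∈ Icc a₀ a₁, -a ∈ integrableExpSet X P)
    (hY : ∀ a ∈ Icc a₀ a₁, -a ∈ integrableExpSet Y P) :
    Integrable (fun p : ℝ × Ω => entropicMajorant P X Y p.1 p.2)
      ((m.restrict (Icc a₀ a₁)).prod P) :=
  (integrable_mul_entropicDensity_prod hmX (ae_restrict_of_forall_mem measurableSet_Icc hX)
    (continuousOn_entropic_sub_sub_one_div ha₀ hX hY).integrableOn_Icc).add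
  (integrable_mul_entropicDensity_prod hmY (ae_restrict_of_forall_mem measurableSet_Icc hY)
    (continuousOn_one_div_Icc ha₀).integrableOn_Icc)

lemma setIntegral_integral_entropicMajorant (ha₀ : 0 < a₀)
    (hX : ∀ a ∈ Icc a₀ a₁, -a ∈ integrableExpSet X P)
    (hY : ∀ a ∈ Icc a₀ a₁, -a ∈ integrableExpSet Y P) :
    ∫ a in Icc a₀ a₁, ∫ ω, entropicMajorant P X Y a ω ∂P ∂m
      = werm P m a₀ a₁ Y - werm P m a₀ a₁ X := by
  rw [werm, werm, ← integral_sub (continuousOn_entropic ha₀ hY).integrableOn_Icc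
    (continuousOn_entropic ha₀ hX).integrableOn_Icc]
  exact setIntegral_congr_fun measurableSet_Icc fun a ha =>
    integral_entropicMajorant (hX a ha) (hY a ha)

lemma hprime_mul_sub_le (ha₀ : 0 < a₀)
    (hX : ∀ a ∈ Icc a₀ a₁, -a ∈ integrableExpSet X P)
    (hY : ∀ a ∈ Icc a₀ a₁, -a ∈ integrableExpSet Y P) (ω : Ω) :
    hprime P m a₀ a₁ X ω * (Y ω - X ω) ≤ ∫ a in Icc a₀ a₁, entropicMajorant P X Y a ω ∂m :=
  calc hprime P m a₀ a₁ X ω * (Y ω - X ω)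
      = ∫ a in Icc a₀ a₁, -(entropicDensity P X a ω * (Y ω - X ω)) ∂m := by
        rw [hprime_eq_neg_setIntegral_entropicDensity, neg_mul, integral_neg, integral_mul_const]
    _ ≤ ∫ a in Icc a₀ a₁, entropicMajorant P X Y a ω ∂m :=
        setIntegral_mono_on
          ((continuousOn_entropicDensity hX ω).mul continuousOn_const).neg.integrableOn_Icc
          (continuousOn_entropicMajorant ha₀ hX hY ω).integrableOn_Icc measurableSet_Icc
          fun a ha => neg_entropicDensity_mul_sub_le (ha₀.trans_le ha.1) (hX a ha) (hY a ha) ω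

end WeightInterval

theorem werm_gradient_inequality_general {P : Measure Ω} [SFinite P] [NeZero P]
    {a₀ a₁ : ℝ} (ha₀ : 0 < a₀) {m : Measure ℝ} [IsLocallyFiniteMeasure m] {X Y : Ω → ℝ}
    (hmX : AEMeasurable X P) (hmY : AEMeasurable Y P)
    (hX : ∀ a ∈ Icc a₀ a₁, -a ∈ integrableExpSet X P)
    (hY : ∀ a ∈ Icc a₀ a₁, -a ∈ integrableExpSet Y P) :
    eint P (fun ω => hprime P m a₀ a₁ X ω * (Y ω - X ω))
      ≤ ((werm P m a₀ a₁ Y - werm P m a₀ a₁ X : ℝ) : EReal) ∧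
    eint P (fun ω => hprime P m a₀ a₁ X ω * (Y ω - X ω)) < (⊤ : EReal) := by
  have hint := integrable_entropicMajorant_prod (m := m) ha₀ hmX hmY hX hY
  have hle : eint P (fun ω => hprime P m a₀ a₁ X ω * (Y ω - X ω))
      ≤ ((werm P m a₀ a₁ Y - werm P m a₀ a₁ X : ℝ) : EReal) :=
    calc eint P (fun ω => hprime P m a₀ a₁ X ω * (Y ω - X ω))
        ≤ eint P (fun ω => ∫ a in Icc a₀ a₁, entropicMajorant P X Y a ω ∂m) :=
          eint_mono_ae (.of_forall (hprime_mul_sub_le ha₀ hX hY))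
      _ = ((∫ ω, ∫ a in Icc a₀ a₁, entropicMajorant P X Y a ω ∂m ∂P : ℝ) : EReal) :=
          eint_eq_coe_integral hint.integral_prod_right
      _ = ((werm P m a₀ a₁ Y - werm P m a₀ a₁ X : ℝ) : EReal) := by
          rw [← integral_integral_swap hint, setIntegral_integral_entropicMajorant ha₀ hX hY]
  exact ⟨hle, hle.trans_lt (EReal.coe_lt_top _)⟩

/-- the gradient inequality `h(Y) - h(X) ≥ E[h′(X)(Y-X)]` for nonnegative
`X, Y`, where the expectation is a well-defined element of `[-∞,∞)` (encoded in `EReal`). -/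
theorem werm_gradient_inequality (P : Measure Ω) [IsProbabilityMeasure P]
    (a₀ a₁ : ℝ) (ha₀ : 0 < a₀) (ha₀₁ : a₀ < a₁)
    (m : Measure ℝ) [IsProbabilityMeasure m] (hm : m (Set.Icc a₀ a₁) = 1)
    (X Y : Ω → ℝ) (hmX : Measurable X) (hX0 : ∀ᵐ ω ∂P, 0 ≤ X ω)
    (hmY : Measurable Y) (hY0 : ∀ᵐ ω ∂P, 0 ≤ Y ω) :
    eint P (fun ω => hprime P m a₀ a₁ X ω * (Y ω - X ω))
      ≤ ((werm P m a₀ a₁ Y - werm P m a₀ a₁ X : ℝ) : EReal) ∧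
    eint P (fun ω => hprime P m a₀ a₁ X ω * (Y ω - X ω)) < (⊤ : EReal) := by
  exact werm_gradient_inequality_general ha₀ hmX.aemeasurable hmY.aemeasurable
    (fun _ ha => neg_mem_integrableExpSet_of_nonneg hmX.aemeasurable hX0 (ha₀.le.trans ha.1))
    (fun _ ha => neg_mem_integrableExpSet_of_nonneg hmY.aemeasurable hY0 (ha₀.le.trans ha.1))
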